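/- arXiv:1807.10952 — 3 statements merged into one kernel-verified Lean document; each statement's English description precedes it below -/
import Mathlib

section
/- Let f : ℝ^m → ℝ^m be a C^∞ map, let y be the solution of the initial value problem y′(t) = f(y(t)), y(t₀) = y₀, defined on a neighborhood of t₀, and let k ≥ 1 be a natural number. For h > 0 define the Euler iterates y_{j}(h) by y_0(h) = y₀ and y_{j+1}(h) = y_j(h) + h·f(y_j(h)). Then the k-th forward difference of the Euler iterates divided by h^k approximates the k-th derivative of the solution with error O(h): (1/h^k) · ∑_{j=0}^{k} (−1)^j C(k,j) y_{k−j}(h) − y^{(k)}(t₀) = O(h) as h → 0⁺, i.e. there exist constants C > 0 and h₀ > 0 such that the Euclidean norm of the left-hand side is at most C·h for all 0 < h < h₀. -/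
open Filter

namespace EulerFD

open Asymptotics Topology

variable {E : Type*} [NormedAddCommGroup E] [NormedSpace ℝ E]

/-- derivative in the step variable -/
noncomputable def dh (G : ℝ × E → E) : ℝ × E → E := fun p => fderiv ℝ G p (1, 0)

/-- Lie derivative along `f` -/
noncomputable def L (f : E → E) (g : E → E) : E → E := fun x => fderiv ℝ g x (f x)

/-- forward difference along Euler steps -/
def S (f : E → E) : (ℝ × E → E) →ₗ[ℝ] (ℝ × E → E) where
  toFun G := fun p => G (p.1, p.2 + p.1 • f p.2) - G p
  map_add' G H := by
    funext p
    simp only [Pi.add_apply]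
    abel
  map_smul' a G := by
    funext p
    simp [smul_sub]

theorem S_apply (f : E → E) (G : ℝ × E → E) (p : ℝ × E) :
    S f G p = G (p.1, p.2 + p.1 • f p.2) - G p := rfl

theorem dh_smooth {G : ℝ × E → E} (hG : ContDiff ℝ (⊤ : ℕ∞) G) :
    ContDiff ℝ (⊤ : ℕ∞) (dh G) :=
  (hG.fderiv_right (m := (⊤ : ℕ∞)) (by simp)).clm_apply contDiff_const

theorem dh_iter_smooth {G : ℝ × E → E} (hG : ContDiff ℝ (⊤ : ℕ∞) G) (n : ℕ) :
    ContDiff ℝ (⊤ : ℕ∞) (dh^[n] G) := by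
  induction n with
  | zero => simpa using hG
  | succ n ih => rw [Function.iterate_succ_apply']; exact dh_smooth ih

theorem L_smooth {f g : E → E} (hf : ContDiff ℝ (⊤ : ℕ∞) f) (hg : ContDiff ℝ (⊤ : ℕ∞) g) :
    ContDiff ℝ (⊤ : ℕ∞) (L f g) :=
  (hg.fderiv_right (m := (⊤ : ℕ∞)) (by simp)).clm_apply hf

theorem L_iter_smooth {f g : E → E} (hf : ContDiff ℝ (⊤ : ℕ∞) f)
    (hg : ContDiff ℝ (⊤ : ℕ∞) g) (n : ℕ) :
    ContDiff ℝ (⊤ : ℕ∞) ((L f)^[n] g) := by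
  induction n with
  | zero => simpa using hg
  | succ n ih => rw [Function.iterate_succ_apply']; exact L_smooth hf ih

theorem hasDerivAt_slice {G : ℝ × E → E} (hG : ContDiff ℝ (⊤ : ℕ∞) G) (s : ℝ) (x : E) :
    HasDerivAt (fun t => G (t, x)) (dh G (s, x)) s := by
  have h1 : HasFDerivAt G (fderiv ℝ G (s, x)) (s, x) :=
    (hG.differentiable (by simp) _).hasFDerivAt
  have h2 : HasDerivAt (fun t : ℝ => (t, x)) ((1 : ℝ), (0 : E)) s :=
    (hasDerivAt_id s).prodMk (hasDerivAt_const s x)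
  exact h1.comp_hasDerivAt s h2

theorem bdd {α : Type*} [TopologicalSpace α] {G : α → E} (hG : Continuous G) (a : α) :
    G =O[𝓝 a] fun _ => (1 : ℝ) :=
  (hG.tendsto a).isBigO_one ℝ

/-- Taylor expansion in the step variable, locally uniformly in the space variable. -/
theorem taylor (x0 : E) (N : ℕ) : ∀ G : ℝ × E → E, ContDiff ℝ (⊤ : ℕ∞) G →
    (fun p : ℝ × E => G p - ∑ i ∈ Finset.range N,
      p.1 ^ i • ((i.factorial : ℝ)⁻¹ • (dh^[i] G) (0, p.2)))
      =O[𝓝 ((0 : ℝ), x0)] fun p => p.1 ^ N := by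
  induction N with
  | zero =>
    intro G hG
    simpa using bdd hG.continuous (0, x0)
  | succ N ih =>
    intro G hG
    obtain ⟨C, hC⟩ := (ih _ (dh_smooth hG)).bound
    obtain ⟨ε, hε, hball⟩ := Metric.eventually_nhds_iff_ball.1 hC
    refine IsBigO.of_bound C ?_
    filter_upwards [Metric.ball_mem_nhds _ hε] with p hp
    obtain ⟨h, x⟩ := p
    set φ : ℝ → E := fun t => G (t, x) - ∑ i ∈ Finset.range (N + 1),
      t ^ i • ((i.factorial : ℝ)⁻¹ • (dh^[i] G) (0, x)) with hφ
    have hφ0 : φ 0 = 0 := by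
      simp [hφ, Finset.sum_range_succ']
    have hd : ∀ t, HasDerivAt φ (dh G (t, x) - ∑ i ∈ Finset.range N,
      t ^ i • ((i.factorial : ℝ)⁻¹ • (dh^[i] (dh G)) (0, x))) t := by
      intro t
      refine (hasDerivAt_slice hG t x).sub ?_
      have := HasDerivAt.fun_sum (u := Finset.range (N + 1)) (fun i _ =>
        ((hasDerivAt_pow i t).smul_const ((i.factorial : ℝ)⁻¹ • (dh^[i] G) (0, x))))
      refine this.congr_deriv ?_
      rw [Finset.sum_range_succ']
      simp only [Nat.cast_zero, zero_mul, zero_smul, add_zero]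
      refine Finset.sum_congr rfl fun i _ => ?_
      rw [Function.iterate_succ_apply, smul_smul, smul_smul]
      congr 1
      rw [Nat.factorial_succ]
      have : (i.factorial : ℝ) ≠ 0 := by positivity
      push_cast
      have : (i + 1 : ℝ) ≠ 0 := by positivity
      try simp only [Nat.add_sub_cancel]
      field_simp
    rw [Metric.mem_ball, Prod.dist_eq, max_lt_iff] at hp
    simp only [dist_zero_right, Real.norm_eq_abs] at hp
    have key := Convex.norm_image_sub_le_of_norm_hasDerivWithin_le (f := φ)
      (s := Set.uIcc 0 h) (C := C * |h| ^ N) (x := 0) (y := h)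
      (fun t _ => (hd t).hasDerivWithinAt) ?_ (convex_uIcc 0 h) Set.left_mem_uIcc
      Set.right_mem_uIcc
    · rw [hφ0] at key
      simp only [sub_zero, Real.norm_eq_abs] at key
      simpa [hφ, pow_succ, mul_assoc] using key
    · intro t ht
      have hth : |t| ≤ |h| := by
        have := Set.abs_sub_left_of_mem_uIcc ht
        simpa using this
      have hb := hball (t, x) (by
        rw [Metric.mem_ball, Prod.dist_eq, max_lt_iff]
        simp only [dist_zero_right, Real.norm_eq_abs]
        exact ⟨lt_of_le_of_lt hth hp.1, hp.2⟩)
      simp only [norm_pow, Real.norm_eq_abs] at hb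
      by_cases h0 : C < 0
      · exfalso
        have hb1 := hball (ε / 2, x0) (by
          rw [Metric.mem_ball, Prod.dist_eq, max_lt_iff]
          simp only [dist_zero_right, Real.norm_eq_abs, dist_self]
          exact ⟨by rw [abs_of_pos (by positivity)]; linarith, hε⟩)
        have h3 : 0 < ‖(ε / 2) ^ N‖ := norm_pos_iff.2 (by positivity)
        have h4 := (norm_nonneg _).trans hb1
        nlinarith
      · push Not at h0
        refine hb.trans ?_
        gcongr

theorem S_bigO {f : E → E} (hf : Continuous f) (x0 : E) (N : ℕ) {R : ℝ × E → E}
    (hR : R =O[𝓝 ((0 : ℝ), x0)] fun p => p.1 ^ N) (n : ℕ) :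
    ((S f ^ n) R) =O[𝓝 ((0 : ℝ), x0)] fun p => p.1 ^ N := by
  induction n with
  | zero => simpa using hR
  | succ n ih =>
    rw [pow_succ', Module.End.mul_apply]
    have ht : Tendsto (fun p : ℝ × E => (p.1, p.2 + p.1 • f p.2)) (𝓝 ((0 : ℝ), x0))
        (𝓝 ((0 : ℝ), x0)) := by
      have hc : Continuous (fun p : ℝ × E => (p.1, p.2 + p.1 • f p.2)) := by fun_prop
      simpa using hc.tendsto ((0 : ℝ), x0)
    exact (ih.comp_tendsto ht).sub ih

theorem S_smul (f : E → E) (a : ℝ → ℝ) (G : ℝ × E → E) (n : ℕ) :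
    (S f ^ n) (fun p => a p.1 • G p) = fun p => a p.1 • (S f ^ n) G p := by
  induction n with
  | zero => simp
  | succ n ih =>
    rw [pow_succ', Module.End.mul_apply, Module.End.mul_apply, ih]
    funext p
    simp [S_apply, smul_sub]

theorem S_main {f : E → E} (hf : ContDiff ℝ (⊤ : ℕ∞) f) (x0 : E) (n : ℕ) :
    ∀ g : E → E, ContDiff ℝ (⊤ : ℕ∞) g →
    (fun p : ℝ × E => (S f ^ n) (fun q => g q.2) p - p.1 ^ n • ((L f)^[n] g) p.2)
      =O[𝓝 ((0 : ℝ), x0)] fun p => p.1 ^ (n + 1) := by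
  induction n with
  | zero =>
    intro g hg
    simpa using isBigO_zero _ _
  | succ n ih =>
    intro g hg
    set GG : ℝ × E → E := fun p => g (p.2 + p.1 • f p.2) with hGG
    have hGs : ContDiff ℝ (⊤ : ℕ∞) GG := by
      refine hg.comp (contDiff_snd.add (contDiff_fst.smul (hf.comp contDiff_snd)))
    set c : ℕ → E → E := fun i x => (i.factorial : ℝ)⁻¹ • (dh^[i] GG) (0, x) with hc
    have hcs : ∀ i, ContDiff ℝ (⊤ : ℕ∞) (c i) := fun i =>
      ((dh_iter_smooth hGs i).comp (contDiff_const.prodMk contDiff_id)).const_smul _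
    have hc0 : c 0 = g := by
      funext x; simp [hc, hGG]
    have hc1 : c 1 = L f g := by
      funext x
      simp only [hc, Nat.factorial_one, Nat.cast_one, inv_one, one_smul, Function.iterate_one]
      refine (hasDerivAt_slice hGs 0 x).unique ?_
      have h1 : HasFDerivAt g (fderiv ℝ g x) (x + (0 : ℝ) • f x) := by
        simpa using (hg.differentiable (by simp) x).hasFDerivAt
      have h2 : HasDerivAt (fun t : ℝ => x + t • f x) (f x) 0 := by
        simpa using ((hasDerivAt_id (0 : ℝ)).smul_const (f x)).const_add x
      exact h1.comp_hasDerivAt 0 h2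
    have hT := taylor x0 (n + 2) GG hGs
    set R : ℝ × E → E := fun p => GG p - ∑ i ∈ Finset.range (n + 2), p.1 ^ i • c i p.2 with hR
    have hT' : R =O[𝓝 ((0 : ℝ), x0)] fun p => p.1 ^ (n + 2) := hT
    have hdec : S f (fun q => g q.2) =
        (∑ i ∈ Finset.range (n + 1), fun p : ℝ × E => p.1 ^ (i + 1) • c (i + 1) p.2) + R := by
      funext p
      simp only [S_apply, Pi.add_apply, Finset.sum_apply, hR]
      rw [Finset.sum_range_succ' _ (n + 1)]
      simp only [pow_zero, one_smul, hc0, hGG]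
      abel
    have hmul : ∀ i, (S f ^ n) (fun p : ℝ × E => p.1 ^ (i + 1) • c (i + 1) p.2) =
        fun p => p.1 ^ (i + 1) • (S f ^ n) (fun q => c (i + 1) q.2) p := fun i =>
      S_smul f (fun h => h ^ (i + 1)) (fun q => c (i + 1) q.2) n
    have hexp : (fun p : ℝ × E => (S f ^ (n + 1)) (fun q => g q.2) p
          - p.1 ^ (n + 1) • ((L f)^[n + 1] g) p.2) = fun p =>
        (∑ i ∈ Finset.range n, p.1 ^ (i + 2) • (S f ^ n) (fun q => c (i + 2) q.2) p)
        + p.1 • ((S f ^ n) (fun q => c 1 q.2) p - p.1 ^ n • ((L f)^[n] (c 1)) p.2)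
        + (S f ^ n) R p := by
      funext p
      rw [pow_succ, Module.End.mul_apply, hdec, map_add, map_sum]
      simp only [hmul, Pi.add_apply, Finset.sum_apply]
      rw [Finset.sum_range_succ', Function.iterate_succ_apply, hc1]
      simp only [smul_sub, smul_smul, zero_add, pow_one, hc1, ← pow_succ']
      abel
    rw [hexp]
    have hle : ∀ i, (fun p : ℝ × E => p.1 ^ (i + (n + 2))) =O[𝓝 ((0 : ℝ), x0)]
        fun p => p.1 ^ (n + 2) := by
      intro i
      have h1 : (fun p : ℝ × E => p.1 ^ i) =O[𝓝 ((0 : ℝ), x0)] fun _ => (1 : ℝ) :=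
        bdd (by fun_prop) _
      simpa [pow_add] using h1.mul (isBigO_refl (fun p : ℝ × E => p.1 ^ (n + 2)) _)
    refine ((IsBigO.fun_sum fun i _ => ?_).add ?_).add (S_bigO hf.continuous x0 _ hT' n)
    · have h1 := ih (c (i + 2)) (hcs _)
      have h2 : (fun p : ℝ × E => p.1 ^ n • ((L f)^[n] (c (i + 2))) p.2)
          =O[𝓝 ((0 : ℝ), x0)] fun p => p.1 ^ n := by
        have h3 : (fun p : ℝ × E => ((L f)^[n] (c (i + 2))) p.2) =O[𝓝 ((0 : ℝ), x0)]
            fun _ => (1 : ℝ) :=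
          bdd ((L_iter_smooth hf (hcs _) n).continuous.comp continuous_snd) _
        simpa using (isBigO_refl (fun p : ℝ × E => p.1 ^ n) _).smul h3
      have h4 : (fun p : ℝ × E => p.1 ^ (n + 1)) =O[𝓝 ((0 : ℝ), x0)] fun p => p.1 ^ n := by
        have h1 : (fun p : ℝ × E => p.1) =O[𝓝 ((0 : ℝ), x0)] fun _ => (1 : ℝ) :=
          bdd (by fun_prop) _
        simpa [pow_succ] using (isBigO_refl (fun p : ℝ × E => p.1 ^ n) _).mul h1
      have h5 := (h1.trans h4).add h2
      simp only [sub_add_cancel] at h5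
      have h6 := (isBigO_refl (fun p : ℝ × E => p.1 ^ (i + 2)) (𝓝 ((0 : ℝ), x0))).smul h5
      refine h6.trans ((hle i).congr_left fun p => ?_)
      simp only [smul_eq_mul]
      ring
    · have h6 := (isBigO_refl (fun p : ℝ × E => p.1) (𝓝 ((0 : ℝ), x0))).smul (ih (c 1) (hcs 1))
      refine h6.trans ((hle 0).congr_left fun p => ?_)
      simp only [smul_eq_mul]
      ring

theorem iteratedDeriv_sol {f : E → E} (hf : ContDiff ℝ (⊤ : ℕ∞) f) (t₀ : ℝ) (y : ℝ → E)
    (hy : ∀ᶠ t in 𝓝 t₀, HasDerivAt y (f (y t)) t) (k : ℕ) :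
    iteratedDeriv k y =ᶠ[𝓝 t₀] fun t => ((L f)^[k] id) (y t) := by
  induction k with
  | zero => simp [EventuallyEq.refl]
  | succ k ih =>
    rw [iteratedDeriv_succ]
    refine ih.deriv.trans ?_
    filter_upwards [hy] with t ht
    rw [Function.iterate_succ_apply']
    have h1 := ((L_iter_smooth hf contDiff_id k).differentiable (by simp) (y t)).hasFDerivAt
    exact (h1.comp_hasDerivAt t ht).deriv

theorem S_fwdDiff (f : E → E) (Y : ℝ → ℕ → E)
    (hYs : ∀ (h : ℝ) (j : ℕ), Y h (j + 1) = Y h j + h • f (Y h j)) (h : ℝ) (n : ℕ) :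
    ∀ i, (S f ^ n) (fun q => q.2) (h, Y h i) = (fwdDiff 1)^[n] (Y h) i := by
  induction n with
  | zero => simp
  | succ n ih =>
    intro i
    rw [pow_succ', Module.End.mul_apply, Function.iterate_succ_apply', fwdDiff, S_apply,
      ← ih, ← ih, hYs]

theorem S_sum (f : E → E) (Y : ℝ → ℕ → E)
    (hYs : ∀ (h : ℝ) (j : ℕ), Y h (j + 1) = Y h j + h • f (Y h j)) (h : ℝ) (k : ℕ) :
    ∑ j ∈ Finset.range (k + 1), ((-1 : ℝ) ^ j * (k.choose j)) • Y h (k - j) =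
      (S f ^ k) (fun q => q.2) (h, Y h 0) := by
  rw [S_fwdDiff f Y hYs, fwdDiff_iter_eq_sum_shift, ← Finset.sum_range_reflect]
  refine Finset.sum_congr rfl fun j hj => ?_
  have hj' : j ≤ k := Nat.lt_succ_iff.1 (Finset.mem_range.1 hj)
  have e : k + 1 - 1 - j = k - j := by omega
  rw [e, Nat.sub_sub_self hj', Nat.choose_symm hj', ← Int.cast_smul_eq_zsmul ℝ]
  simp

end EulerFD

/-- Strategy (a): the `k`-th forward difference of the explicit Euler iterates with
stepsize `h`, divided by `h ^ k`, approximates the `k`-th derivative of the solution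
of `y' = f(y)`, `y t₀ = y₀`, with error `O(h)` as `h → 0⁺`. -/
theorem euler_iterates_forward_difference_approx_deriv
    (m : ℕ) (f : EuclideanSpace ℝ (Fin m) → EuclideanSpace ℝ (Fin m))
    (hf : ContDiff ℝ (⊤ : ℕ∞) f)
    (t₀ : ℝ) (y₀ : EuclideanSpace ℝ (Fin m)) (y : ℝ → EuclideanSpace ℝ (Fin m))
    (hy0 : y t₀ = y₀)
    (hy : ∀ᶠ t in nhds t₀, HasDerivAt y (f (y t)) t)
    (k : ℕ) (hk : 1 ≤ k)
    (Y : ℝ → ℕ → EuclideanSpace ℝ (Fin m))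
    (hY0 : ∀ h : ℝ, Y h 0 = y₀)
    (hYs : ∀ (h : ℝ) (j : ℕ), Y h (j + 1) = Y h j + h • f (Y h j)) :
    ∃ C > (0 : ℝ), ∃ h₀ > (0 : ℝ), ∀ h : ℝ, 0 < h → h < h₀ →
      ‖(h ^ k)⁻¹ • ∑ j ∈ Finset.range (k + 1),
          ((-1 : ℝ) ^ j * (k.choose j)) • Y h (k - j) - iteratedDeriv k y t₀‖ ≤ C * h := by
  obtain ⟨C, hCpos, hC⟩ := (EulerFD.S_main hf y₀ k id contDiff_id).exists_pos
  obtain ⟨ε, hε, hball⟩ := Metric.eventually_nhds_iff_ball.1 hC.bound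
  refine ⟨C, hCpos, ε, hε, fun h hpos hlt => ?_⟩
  have hb := hball (h, y₀) (by
    rw [Metric.mem_ball, Prod.dist_eq, max_lt_iff]
    simp only [dist_zero_right, Real.norm_eq_abs, dist_self]
    exact ⟨by rwa [abs_of_pos hpos], hε⟩)
  rw [EulerFD.S_sum f Y hYs, hY0, (EulerFD.iteratedDeriv_sol hf t₀ y hy k).eq_of_nhds, hy0]
  have hk0 : h ^ k ≠ 0 := by positivity
  simp only [id] at hb
  set A := (EulerFD.S f ^ k) (fun q => q.2) (h, y₀)
  set B := ((EulerFD.L f)^[k] id) y₀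
  have e : (h ^ k)⁻¹ • A - B = (h ^ k)⁻¹ • (A - h ^ k • B) := by
    rw [smul_sub, smul_smul, inv_mul_cancel₀ hk0, one_smul]
  rw [e, norm_smul, norm_inv, Real.norm_of_nonneg (by positivity : 0 ≤ h ^ k),
    inv_mul_le_iff₀ (by positivity)]
  refine hb.trans (le_of_eq ?_)
  rw [Real.norm_of_nonneg (by positivity)]
  ring
end

section
/- Let f : ℝ^m → ℝ^m be a C^∞ map, let y be the solution of the initial value problem y′(t) = f(y(t)), y(t₀) = y₀, defined on a neighborhood of t₀, and let k ≥ 1 be a natural number. For h > 0 define the Euler iterates y_{j}(h) by y_0(h) = y₀ and y_{j+1}(h) = y_j(h) + h·f(y_j(h)). Then the (k−1)-st forward difference of the values f(y_j(h)) divided by h^{k−1} approximates the k-th derivative of the solution with error O(h): (1/h^{k−1}) · ∑_{j=0}^{k−1} (−1)^j C(k−1,j) f(y_{k−1−j}(h)) − y^{(k)}(t₀) = O(h) as h → 0⁺, i.e. there exist constants C > 0 and h₀ > 0 such that the Euclidean norm of the left-hand side is at most C·h for all 0 < h < h₀. -/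
open Filter

open scoped fwdDiff ContDiff Topology in
/-- Smoothness of parametric integrals over `[0,1]`. -/
theorem contDiff_param_integral {H : Type} [NormedAddCommGroup H] [NormedSpace ℝ H]
    [ProperSpace H] (n : ℕ) : ∀ {F : Type} [NormedAddCommGroup F] [NormedSpace ℝ F]
    (φ : H × ℝ → F), ContDiff ℝ ∞ φ →
    ContDiff ℝ n (fun x => ∫ s in (0:ℝ)..1, φ (x, s)) := by
  induction n with
  | zero =>
    intro F _ _ φ hφ
    have hc := hφ.continuous
    refine contDiff_zero.2 ?_
    exact intervalIntegral.continuous_parametric_intervalIntegral_of_continuous' 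
      (f := fun x s => φ (x, s)) hc 0 1
  | succ n ih =>
    intro F _ _ φ hφ
    have hd : ContDiff ℝ ∞ (fun p : H × ℝ =>
        (fderiv ℝ φ p).comp (ContinuousLinearMap.inl ℝ H ℝ)) :=
      (hφ.fderiv_right (m := ∞) (by simp)).clm_comp contDiff_const
    have := ih _ hd
    push_cast
    refine contDiff_succ_iff_hasFDerivAt.2 ⟨_, this, fun x₀ => ?_⟩
    have hK : IsCompact (Metric.closedBall x₀ 1 ×ˢ Set.Icc (0:ℝ) 1) :=
      (isCompact_closedBall x₀ 1).prod isCompact_Icc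
    obtain ⟨C, hC⟩ := hK.exists_bound_of_continuousOn hd.continuous.continuousOn
    refine intervalIntegral.hasFDerivAt_integral_of_dominated_of_fderiv_le
      (F := fun x s => φ (x, s))
      (F' := fun x s => (fderiv ℝ φ (x, s)).comp (ContinuousLinearMap.inl ℝ H ℝ))
      (bound := fun _ => C) (Metric.closedBall_mem_nhds x₀ one_pos) ?_ ?_ ?_ ?_ ?_ ?_
    · refine Eventually.of_forall fun x => ?_
      exact (hφ.continuous.comp (Continuous.prodMk_right x)).aestronglyMeasurable
    · exact (hφ.continuous.comp (Continuous.prodMk_right x₀)).intervalIntegrable _ _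
    · exact (hd.continuous.comp (Continuous.prodMk_right x₀)).aestronglyMeasurable
    · refine Eventually.of_forall fun s hs x hx => hC (x, s) ⟨hx, ?_⟩
      rw [Set.uIoc_of_le zero_le_one] at hs
      exact ⟨hs.1.le, hs.2⟩
    · exact intervalIntegrable_const
    · refine Eventually.of_forall fun s hs x hx => ?_
      have h1 : HasFDerivAt φ (fderiv ℝ φ (x, s)) (x, s) :=
        (hφ.differentiable (by simp) _).hasFDerivAt
      exact h1.comp x (hasFDerivAt_prodMk_left x s)

open scoped ContDiff in
/-- Hadamard-type division of the Euler increment by `h`. -/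
theorem euler_step_quotient {E : Type} [NormedAddCommGroup E] [NormedSpace ℝ E]
    [FiniteDimensional ℝ E] (f : E → E) (hf : ContDiff ℝ ∞ f)
    (g : ℝ × E → E) (hg : ContDiff ℝ ∞ g) :
    ∃ g' : ℝ × E → E, ContDiff ℝ ∞ g' ∧
      (∀ h x, h • g' (h, x) = g (h, x + h • f x) - g (h, x)) ∧
      ∀ x, g' (0, x) = fderiv ℝ g (0, x) (0, f x) := by
  haveI : ProperSpace E := FiniteDimensional.proper ℝ E
  let φ : (ℝ × E) × ℝ → E := fun q =>
    fderiv ℝ g (q.1.1, q.1.2 + q.2 • q.1.1 • f q.1.2) (0, f q.1.2)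
  have hφ : ContDiff ℝ ∞ φ := by
    have h1 : ContDiff ℝ ∞ (fderiv ℝ g) := hg.fderiv_right (m := ∞) (by simp)
    have h2 : ContDiff ℝ ∞ (fun q : (ℝ × E) × ℝ => f q.1.2) :=
      hf.comp (contDiff_snd.comp contDiff_fst)
    refine ContDiff.clm_apply (h1.comp ?_) (contDiff_const.prodMk h2)
    fun_prop
  refine ⟨fun p => ∫ s in (0:ℝ)..1, φ (p, s), ?_, ?_, ?_⟩
  · exact contDiff_infty.2 fun n => contDiff_param_integral n φ hφ
  · intro h x
    rw [← intervalIntegral.integral_smul]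
    have hder : ∀ s ∈ Set.uIcc (0:ℝ) 1, HasDerivAt (fun s : ℝ => g (h, x + s • h • f x))
        (h • φ ((h, x), s)) s := by
      intro s _
      have h1 : HasFDerivAt g (fderiv ℝ g (h, x + s • h • f x)) (h, x + s • h • f x) :=
        (hg.differentiable (by simp) _).hasFDerivAt
      have h2 : HasDerivAt (fun s : ℝ => (h, x + s • h • f x)) ((0:ℝ), h • f x) s := by
        refine (hasDerivAt_const s h).prodMk ?_
        simpa using ((hasDerivAt_id s).smul_const (h • f x)).const_add x
      have h3 := h1.comp_hasDerivAt s h2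
      have h4 : ((0:ℝ), h • f x) = h • ((0:ℝ), f x) := by simp
      rw [h4, map_smul] at h3
      exact h3
    rw [intervalIntegral.integral_eq_sub_of_hasDerivAt hder]
    · simp
    · have : Continuous fun s : ℝ => φ ((h, x), s) :=
        hφ.continuous.comp (Continuous.prodMk_right _)
      exact (this.const_smul h).intervalIntegrable _ _
  · intro x
    simp [φ]

open scoped fwdDiff ContDiff in
theorem euler_smooth_family {E : Type} [NormedAddCommGroup E] [NormedSpace ℝ E]
    [FiniteDimensional ℝ E] (f : E → E) (hf : ContDiff ℝ ∞ f)
    (t₀ : ℝ) (y : ℝ → E) (hy : ∀ᶠ t in nhds t₀, HasDerivAt y (f (y t)) t)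
    (Y : ℝ → ℕ → E) (hYs : ∀ (h : ℝ) (j : ℕ), Y h (j + 1) = Y h j + h • f (Y h j)) (n : ℕ) :
    ∃ g : ℝ × E → E, ContDiff ℝ ∞ g ∧
      (∀ h j, h ^ n • g (h, Y h j) = (fwdDiff 1)^[n] (fun j => f (Y h j)) j) ∧
      ∀ᶠ t in nhds t₀, iteratedDeriv (n + 1) y t = g (0, y t) := by
  induction n with
  | zero =>
    refine ⟨fun p => f p.2, hf.comp contDiff_snd, by simp, ?_⟩
    filter_upwards [hy] with t ht
    simpa using ht.deriv
  | succ n ih =>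
    obtain ⟨g, hg, hg1, hg2⟩ := ih
    obtain ⟨g', hg', h1, h2⟩ := euler_step_quotient f hf g hg
    refine ⟨g', hg', ?_, ?_⟩
    · intro h j
      rw [Function.iterate_succ_apply', fwdDiff, ← hg1, ← hg1, pow_succ, mul_smul, h1, hYs,
        smul_sub]
    · filter_upwards [hg2.eventually_nhds, hy] with t ht hyt
      rw [iteratedDeriv_succ, EventuallyEq.deriv_eq ht, h2]
      have h3 : HasFDerivAt g (fderiv ℝ g (0, y t)) (0, y t) :=
        (hg.differentiable (by simp) _).hasFDerivAt
      exact (h3.comp_hasDerivAt t ((hasDerivAt_const t (0:ℝ)).prodMk hyt)).deriv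


/-- Strategy (b): the `(k-1)`-st forward difference of the vector-field values along the
explicit Euler iterates with stepsize `h`, divided by `h ^ (k-1)`, approximates the `k`-th
derivative of the solution of `y' = f(y)`, `y t₀ = y₀`, with error `O(h)` as `h → 0⁺`. -/
theorem euler_iterates_f_forward_difference_approx_deriv
    (m : ℕ) (f : EuclideanSpace ℝ (Fin m) → EuclideanSpace ℝ (Fin m))
    (hf : ContDiff ℝ (⊤ : ℕ∞) f)
    (t₀ : ℝ) (y₀ : EuclideanSpace ℝ (Fin m)) (y : ℝ → EuclideanSpace ℝ (Fin m))
    (hy0 : y t₀ = y₀)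
    (hy : ∀ᶠ t in nhds t₀, HasDerivAt y (f (y t)) t)
    (k : ℕ) (hk : 1 ≤ k)
    (Y : ℝ → ℕ → EuclideanSpace ℝ (Fin m))
    (hY0 : ∀ h : ℝ, Y h 0 = y₀)
    (hYs : ∀ (h : ℝ) (j : ℕ), Y h (j + 1) = Y h j + h • f (Y h j)) :
    ∃ C > (0 : ℝ), ∃ h₀ > (0 : ℝ), ∀ h : ℝ, 0 < h → h < h₀ →
      ‖(h ^ (k - 1))⁻¹ • ∑ j ∈ Finset.range k,
          ((-1 : ℝ) ^ j * ((k - 1).choose j)) • f (Y h (k - 1 - j))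
        - iteratedDeriv k y t₀‖ ≤ C * h := by
  obtain ⟨n, rfl⟩ : ∃ n, k = n + 1 := ⟨k - 1, by omega⟩
  obtain ⟨g, hg, hg1, hg2⟩ := euler_smooth_family f hf t₀ y hy Y hYs n
  have hd : DifferentiableAt ℝ (fun h : ℝ => g (h, y₀)) 0 := by
    have := hg.differentiable (by simp)
    fun_prop
  obtain ⟨C, hC, hO⟩ := hd.isBigO_sub.exists_pos
  rw [Asymptotics.IsBigOWith_def, Metric.eventually_nhds_iff] at hO
  obtain ⟨ε, hε, hb⟩ := hO
  refine ⟨C, hC, ε, hε, fun h hh hhε => ?_⟩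
  have h1 := hb (y := h) (by simpa [abs_of_pos hh] using hhε)
  rw [hg2.self_of_nhds, hy0]
  have h2 : ∑ j ∈ Finset.range (n + 1),
      ((-1 : ℝ) ^ j * ((n + 1 - 1).choose j)) • f (Y h (n + 1 - 1 - j)) = h ^ n • g (h, y₀) := by
    have h3 := hg1 h 0
    rw [hY0, fwdDiff_iter_eq_sum_shift] at h3
    rw [h3, ← Finset.sum_range_reflect]
    refine Finset.sum_congr rfl fun j hj => ?_
    have hj' : j ≤ n := by simpa [Nat.lt_succ_iff] using hj
    have e : n - (n - j) = j := by omega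
    simp only [Nat.add_sub_cancel, e, Nat.choose_symm hj', smul_eq_mul, mul_one, zero_add]
    rw [← Int.cast_smul_eq_zsmul ℝ]
    simp
  rw [h2, Nat.add_sub_cancel, inv_smul_smul₀ (pow_ne_zero _ hh.ne')]
  simpa [abs_of_pos hh] using h1
end

section
/- Let s ≥ 1 be a natural number, let t₀ ∈ ℝ, and let y : ℝ → ℝ^m be of class C^{2s+1} on a neighborhood of t₀. Then the defect of the Euler–Maclaurin formula of order 2s along y is O(h^{2s+1}) as h → 0: the function h ↦ y(t₀+h) − y(t₀) − (h/2)·( y′(t₀+h) + y′(t₀) ) + ∑_{k=1}^{s−1} (B_{2k}/(2k)!) · h^{2k} · ( y^{(2k)}(t₀+h) − y^{(2k)}(t₀) ) is O(h^{2s+1}) as h → 0, where B_{2k} is the 2k-th Bernoulli number and y^{(j)} denotes the j-th derivative of y. -/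
open Filter Asymptotics

theorem em_taylor {E : Type*} [NormedAddCommGroup E] [NormedSpace ℝ E] (M : ℕ) (t₀ : ℝ)
    (f : ℝ → E) (hf : ContDiffAt ℝ (M : ℕ) f t₀) :
    (fun h : ℝ => f (t₀ + h) -
      ∑ i ∈ Finset.range M, ((i.factorial : ℝ)⁻¹ * h ^ i) • iteratedDeriv i f t₀)
      =O[nhds (0 : ℝ)] fun h : ℝ => h ^ M := by
  obtain ⟨u, hu, hfu⟩ := hf.contDiffOn (m := (M : ℕ)) le_rfl (by simp)
  obtain ⟨ε, hε, hb⟩ := Metric.mem_nhds_iff.1 hu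
  have hx : t₀ ∈ Metric.ball t₀ ε := Metric.mem_ball_self hε
  have h1 := (taylor_isLittleO (convex_ball t₀ ε) hx (hfu.mono hb)).isBigO
  rw [Metric.isOpen_ball.nhdsWithin_eq hx] at h1
  have ht : Tendsto (fun h : ℝ => t₀ + h) (nhds 0) (nhds t₀) := by
    have : Continuous (fun h : ℝ => t₀ + h) := by fun_prop
    simpa using this.tendsto 0
  have h2 := h1.comp_tendsto ht
  have h3 : (fun h : ℝ => ((M.factorial : ℝ)⁻¹ * h ^ M) • iteratedDeriv M f t₀)
      =O[nhds (0 : ℝ)] fun h : ℝ => h ^ M := by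
    refine IsBigO.of_bound (‖(M.factorial : ℝ)⁻¹‖ * ‖iteratedDeriv M f t₀‖) ?_
    filter_upwards with h
    rw [norm_smul, norm_mul]
    apply le_of_eq
    ring
  have h4 : (fun h : ℝ => f (t₀ + h) -
      ∑ i ∈ Finset.range (M + 1), ((i.factorial : ℝ)⁻¹ * h ^ i) • iteratedDeriv i f t₀)
      =O[nhds (0 : ℝ)] fun h : ℝ => h ^ M := by
    refine (h2.congr (fun h => ?_) (fun h => ?_))
    · simp only [Function.comp, taylor_within_apply, add_sub_cancel_left]
      congr 1
      refine Finset.sum_congr rfl fun i _ => ?_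
      rw [iteratedDerivWithin_of_isOpen Metric.isOpen_ball hx]
    · simp
  refine (h4.add h3).congr_left fun h => ?_
  rw [Finset.sum_range_succ]
  abel

theorem em_contDiffAt {E : Type*} [NormedAddCommGroup E] [NormedSpace ℝ E] (j M : ℕ) (t₀ : ℝ)
    (f : ℝ → E) (hf : ContDiffAt ℝ (M + j : ℕ) f t₀) :
    ContDiffAt ℝ (M : ℕ) (iteratedDeriv j f) t₀ := by
  induction j generalizing M with
  | zero => simpa using hf
  | succ j ih =>
    rw [iteratedDeriv_succ]
    have := ih (M + 1) (by convert hf using 2; ring)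
    exact this.derivWithin (by norm_cast)

theorem em_iter {E : Type*} [NormedAddCommGroup E] [NormedSpace ℝ E] (i j : ℕ)
    (f : ℝ → E) : iteratedDeriv i (iteratedDeriv j f) = iteratedDeriv (j + i) f := by
  rw [iteratedDeriv_eq_iterate, iteratedDeriv_eq_iterate, iteratedDeriv_eq_iterate, add_comm,
    Function.iterate_add_apply]

theorem em_sum_even {E : Type*} [AddCommGroup E] (g : ℕ → E)
    (hg : ∀ j, Odd j → 1 < j → g j = 0) (s : ℕ) :
    ∑ j ∈ Finset.range (2 * (s + 1)), g j = g 0 + g 1 + ∑ k ∈ Finset.Icc 1 s, g (2 * k) := by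
  induction s with
  | zero => simp [Finset.sum_range_succ]
  | succ s ih =>
    rw [show 2 * (s + 1 + 1) = 2 * (s + 1) + 1 + 1 by ring, Finset.sum_range_succ,
      Finset.sum_range_succ, ih, Finset.sum_Icc_succ_top (by omega),
      hg (2 * (s + 1) + 1) ⟨s + 1, rfl⟩ (by omega)]
    abel

theorem em_coeff (n : ℕ) :
    ∑ j ∈ Finset.range (n + 1), (((bernoulli j : ℚ) : ℝ) / j.factorial *
      ((n - j + 1).factorial : ℝ)⁻¹) = if n = 0 then 1 else 0 := by
  have h := sum_bernoulli (n + 1)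
  have h' : ∑ j ∈ Finset.range (n + 1), (((n + 1).choose j : ℝ) * ((bernoulli j : ℚ) : ℝ))
      = if n = 0 then 1 else 0 := by
    have := congrArg (fun q : ℚ => (q : ℝ)) h
    push_cast at this
    split_ifs at this ⊢ <;> simp_all
  have h2 : ∑ j ∈ Finset.range (n + 1), (((bernoulli j : ℚ) : ℝ) / j.factorial *
      ((n - j + 1).factorial : ℝ)⁻¹) = ((n + 1).factorial : ℝ)⁻¹ *
      ∑ j ∈ Finset.range (n + 1), (((n + 1).choose j : ℝ) * ((bernoulli j : ℚ) : ℝ)) := by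
    rw [Finset.mul_sum]
    refine Finset.sum_congr rfl fun j hj => ?_
    have hj' : j ≤ n := by simpa [Nat.lt_succ_iff] using hj
    rw [Nat.cast_choose ℝ (show j ≤ n + 1 by omega), show n + 1 - j = n - j + 1 by omega]
    have a1 : ((n + 1).factorial : ℝ) ≠ 0 := by positivity
    have a2 : (j.factorial : ℝ) ≠ 0 := by positivity
    have a3 : ((n - j + 1).factorial : ℝ) ≠ 0 := by positivity
    field_simp
  rw [h2, h']
  split_ifs with h0
  · simp [h0]
  · simp

theorem em_poly {E : Type*} [AddCommGroup E] [Module ℝ E] (N : ℕ) (c : ℕ → E) (h : ℝ) :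
    ∑ j ∈ Finset.range (N + 1), (((bernoulli j : ℚ) : ℝ) / j.factorial * h ^ j) •
      ∑ i ∈ Finset.range (N + 1 - j), (((i + 1).factorial : ℝ)⁻¹ * h ^ (i + 1)) • c (j + (i + 1))
      = h • c 1 := by
  simp only [Finset.smul_sum]
  rw [← Finset.sum_range_diag_flip (N + 1) (fun j i => (((bernoulli j : ℚ) : ℝ) / j.factorial * h ^ j) •
     (((i + 1).factorial : ℝ)⁻¹ * h ^ (i + 1)) • c (j + (i + 1)))]
  have : ∀ n ∈ Finset.range (N + 1), (∑ j ∈ Finset.range (n + 1),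
      (((bernoulli j : ℚ) : ℝ) / j.factorial * h ^ j) •
     (((n - j + 1).factorial : ℝ)⁻¹ * h ^ (n - j + 1)) • c (j + (n - j + 1)))
     = ((if n = 0 then 1 else 0) * h ^ (n + 1)) • c (n + 1) := by
    intro n _
    rw [← em_coeff n, Finset.sum_mul, Finset.sum_smul]
    refine Finset.sum_congr rfl fun j hj => ?_
    have hj' : j ≤ n := by simpa [Nat.lt_succ_iff] using hj
    rw [show j + (n - j + 1) = n + 1 by omega, smul_smul]
    congr 1
    have : h ^ (n + 1) = h ^ j * h ^ (n - j + 1) := by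
      rw [← pow_add]; congr 1; omega
    rw [this]; ring
  rw [Finset.sum_congr rfl this, Finset.sum_range_succ']
  simp

/-- The defect of the Euler–Maclaurin one-step formula of order `2s` along a `C^{2s+1}`
function `y` is `O(h^{2s+1})` as `h → 0`. -/
theorem euler_maclaurin_method_defect_isBigO
    (m s : ℕ) (hs : 1 ≤ s) (t₀ : ℝ) (y : ℝ → EuclideanSpace ℝ (Fin m))
    (hy : ContDiffAt ℝ (2 * s + 1 : ℕ) y t₀) :
    (fun h : ℝ =>
        y (t₀ + h) - y t₀ - (h / 2) • (deriv y (t₀ + h) + deriv y t₀)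
          + ∑ k ∈ Finset.Icc 1 (s - 1),
            (((bernoulli (2 * k) : ℚ) : ℝ) / (2 * k).factorial * h ^ (2 * k)) •
              (iteratedDeriv (2 * k) y (t₀ + h) - iteratedDeriv (2 * k) y t₀))
      =O[nhds (0 : ℝ)] fun h : ℝ => h ^ (2 * s + 1) := by
  obtain ⟨r, rfl⟩ : ∃ r, s = r + 1 := ⟨s - 1, by omega⟩
  have key : ∀ j ∈ Finset.range (2 * (r + 1)), (fun h : ℝ =>
      (((bernoulli j : ℚ) : ℝ) / j.factorial * h ^ j) •
        (iteratedDeriv j y (t₀ + h) - iteratedDeriv j y t₀ -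
          ∑ i ∈ Finset.range (2 * (r + 1) - j),
            (((i + 1).factorial : ℝ)⁻¹ * h ^ (i + 1)) • iteratedDeriv (j + (i + 1)) y t₀))
      =O[nhds (0 : ℝ)] fun h : ℝ => h ^ (2 * (r + 1) + 1) := by
    intro j hj
    have hj' : j < 2 * (r + 1) := by simpa using hj
    have h1 := em_taylor (2 * (r + 1) - j + 1) t₀ (iteratedDeriv j y)
      (em_contDiffAt j _ t₀ y (by convert hy using 2; omega))
    have h2 : (fun h : ℝ => ((bernoulli j : ℚ) : ℝ) / j.factorial * h ^ j)
        =O[nhds (0 : ℝ)] fun h : ℝ => h ^ j :=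
      (isBigO_refl _ _).const_mul_left _
    refine (h2.smul h1).congr (fun h => ?_) (fun h => ?_)
    · congr 1
      rw [Finset.sum_range_succ']
      simp only [em_iter]
      simp only [Nat.factorial_zero, Nat.cast_one, inv_one, pow_zero, mul_one, one_smul, add_zero]
      abel
    · rw [smul_eq_mul, ← pow_add]; congr 1; omega
  refine (IsBigO.sum key).congr_left fun h => ?_
  simp only [Finset.sum_apply, smul_sub _ (_ - _) _, Finset.sum_sub_distrib]
  have hp := em_poly (2 * r + 1) (fun n => iteratedDeriv n y t₀) h
  rw [show 2 * r + 1 + 1 = 2 * (r + 1) by ring] at hp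
  rw [hp]
  rw [em_sum_even (fun j => (((bernoulli j : ℚ) : ℝ) / j.factorial * h ^ j) •
        (iteratedDeriv j y (t₀ + h) - iteratedDeriv j y t₀))]
  · simp only [Nat.add_sub_cancel, iteratedDeriv_zero, iteratedDeriv_one, bernoulli_zero,
      bernoulli_one]
    norm_num
    module
  · intro j h1 h2
    simp [bernoulli_eq_zero_of_odd h1 h2]
end
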